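/- Let 𝒱_N = Σ_{j∈ℤ} D_j M_{b₁} D^N_j M_{b₁} and ℛ_N = Σ_{|ℓ|>N} Σ_{j∈ℤ} D_j M_{b₁} D_{j+ℓ} M_{b₁}, where D^N_j = Σ_{|ℓ|≤N} D_{j+ℓ}. Then 𝒱_N + ℛ_N = I on L²(ℝⁿ), ‖ℛ_N‖_{L²→L²} → 0 as N → ∞, and consequently 𝒱_N is invertible on L²(ℝⁿ) for N sufficiently large with ‖𝒱_N^{−1}‖ uniformly bounded. -/

import Mathlib

open MeasureTheory

section aux
set_option linter.unusedSectionVars false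
variable {H : Type*} [NormedAddCommGroup H] [InnerProductSpace ℂ H] [CompleteSpace H]

lemma aux_sign (x : ℤ → H) (F : Finset ℤ) :
    ∃ s : ℤ → ℤ, (∀ j, s j = 1 ∨ s j = -1) ∧ ∑ j ∈ F, ‖x j‖ ^ 2 ≤ ‖∑ j ∈ F, s j • x j‖ ^ 2 := by
  classical
  induction F using Finset.induction with
  | empty => exact ⟨fun _ => 1, fun _ => Or.inl rfl, by simp⟩
  | insert a F ha ih =>
    obtain ⟨s, hs, h⟩ := ih
    have hp := parallelogram_law_with_norm ℂ (∑ j ∈ F, s j • x j) (x a)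
    have key : ∀ c : ℤ, ∑ j ∈ insert a F, (if j = a then c else s j) • x j
        = c • x a + ∑ j ∈ F, s j • x j := by
      intro c
      rw [Finset.sum_insert ha, if_pos rfl]
      congr 1
      refine Finset.sum_congr rfl fun j hj => ?_
      rw [if_neg]
      rintro rfl
      exact ha hj
    by_cases hc : ‖∑ j ∈ F, s j • x j‖ ^ 2 + ‖x a‖ ^ 2 ≤ ‖∑ j ∈ F, s j • x j + x a‖ ^ 2
    · refine ⟨fun j => if j = a then 1 else s j, fun j => ?_, ?_⟩
      · dsimp only; split_ifs
        · left; rfl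
        · exact hs j
      · rw [key, Finset.sum_insert ha, one_smul, add_comm (x a)]
        linarith
    · refine ⟨fun j => if j = a then -1 else s j, fun j => ?_, ?_⟩
      · dsimp only; split_ifs
        · right; rfl
        · exact hs j
      · rw [key, Finset.sum_insert ha, neg_one_smul, neg_add_eq_sub]
        nlinarith

lemma aux_sq (T : ℤ → H →L[ℂ] H) (M : ℝ) (hM : ∀ F : Finset ℤ, ‖∑ j ∈ F, T j‖ ≤ M)
    (F : Finset ℤ) (f : H) : ∑ j ∈ F, ‖T j f‖ ^ 2 ≤ (2 * M * ‖f‖) ^ 2 := by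
  classical
  obtain ⟨s, hs, h⟩ := aux_sign (fun j => T j f) F
  refine h.trans ?_
  have e : ∑ j ∈ F, s j • T j f
      = (∑ j ∈ F with s j = 1, T j) f - (∑ j ∈ F with ¬ s j = 1, T j) f := by
    rw [← Finset.sum_filter_add_sum_filter_not F (fun j => s j = 1), sub_eq_add_neg]
    congr 1
    · rw [sum_apply]
      refine Finset.sum_congr rfl fun j hj => ?_
      rw [(Finset.mem_filter.1 hj).2, one_smul]
    · rw [sum_apply, ← Finset.sum_neg_distrib]
      refine Finset.sum_congr rfl fun j hj => ?_
      rw [(hs j).resolve_left (Finset.mem_filter.1 hj).2, neg_one_smul]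
  have h1 := ContinuousLinearMap.le_of_opNorm_le _ (hM (F.filter fun j => s j = 1)) f
  have h2 := ContinuousLinearMap.le_of_opNorm_le _ (hM (F.filter fun j => ¬ s j = 1)) f
  rw [e]
  refine pow_le_pow_left₀ (norm_nonneg _) ?_ 2
  refine (norm_sub_le _ _).trans ?_
  linarith

lemma aux_sq_adj (T : ℤ → H →L[ℂ] H) (M : ℝ) (hM : ∀ F : Finset ℤ, ‖∑ j ∈ F, T j‖ ≤ M)
    (F : Finset ℤ) (f : H) :
    ∑ j ∈ F, ‖ContinuousLinearMap.adjoint (T j) f‖ ^ 2 ≤ (2 * M * ‖f‖) ^ 2 := by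
  refine aux_sq (fun j => ContinuousLinearMap.adjoint (T j)) M (fun F => ?_) F f
  rw [← map_sum, LinearIsometryEquiv.norm_map]
  exact hM F

/-- Schur / Young inequality for finite sums. -/
lemma aux_young (k : ℤ → ℤ → ℝ) (hk : ∀ i c, 0 ≤ k i c) (S : ℝ) (F J : Finset ℤ)
    (h1 : ∀ i, ∑ c ∈ J, k i c ≤ S) (h2 : ∀ c, ∑ i ∈ F, k i c ≤ S) (u : ℤ → ℝ) :
    ∑ i ∈ F, (∑ c ∈ J, k i c * u c) ^ 2 ≤ S ^ 2 * ∑ c ∈ J, u c ^ 2 := by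
  have hS : 0 ≤ S := (Finset.sum_nonneg fun c _ => hk 0 c).trans (h1 0)
  calc ∑ i ∈ F, (∑ c ∈ J, k i c * u c) ^ 2
      ≤ ∑ i ∈ F, S * ∑ c ∈ J, k i c * u c ^ 2 := by
        refine Finset.sum_le_sum fun i _ => ?_
        have := Finset.sum_sq_le_sum_mul_sum_of_sq_le_mul J (r := fun c => k i c * u c)
          (f := fun c => k i c) (g := fun c => k i c * u c ^ 2) (fun c _ => hk i c)
          (fun c _ => mul_nonneg (hk i c) (sq_nonneg _)) (fun c _ => le_of_eq (by ring))
        refine this.trans ?_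
        exact mul_le_mul_of_nonneg_right (h1 i)
          (Finset.sum_nonneg fun c _ => mul_nonneg (hk i c) (sq_nonneg _))
    _ = S * ∑ c ∈ J, (∑ i ∈ F, k i c) * u c ^ 2 := by
        rw [← Finset.mul_sum, Finset.sum_comm]
        simp_rw [Finset.sum_mul]
    _ ≤ S * ∑ c ∈ J, S * u c ^ 2 := by
        gcongr with c hc
        exact h2 c
    _ = _ := by rw [← Finset.mul_sum]; ring

lemma aux_four (T : ℤ → H →L[ℂ] H) (q D : ℝ) (hq0 : 0 < q) (hD : 1 ≤ D)
    (hT : ∀ j, ‖T j‖ ≤ D)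
    (hao : ∀ j k : ℤ, ‖T j * T k‖ ≤ D * (q ^ (j - k).natAbs) ^ 2) (a i j b : ℤ) :
    ‖T a * T i * (T j * T b)‖ ≤
      D ^ 3 * (q ^ (a - i).natAbs * q ^ (j - b).natAbs * q ^ (i - j).natAbs) := by
  have hx1 : ‖T a * T i * (T j * T b)‖ ≤
      D ^ 3 * (q ^ (a - i).natAbs * q ^ (j - b).natAbs) ^ 2 := by
    refine (norm_mul_le _ _).trans ?_
    refine (mul_le_mul (hao a i) (hao j b) (norm_nonneg _) (by positivity)).trans ?_
    have : D ^ 2 ≤ D ^ 3 := pow_le_pow_right₀ hD (by norm_num)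
    calc _ = D ^ 2 * (q ^ (a - i).natAbs * q ^ (j - b).natAbs) ^ 2 := by ring
      _ ≤ _ := by gcongr
  have hx2 : ‖T a * T i * (T j * T b)‖ ≤ D ^ 3 * (q ^ (i - j).natAbs) ^ 2 := by
    have e : T a * T i * (T j * T b) = T a * (T i * T j) * T b := by simp only [mul_assoc]
    rw [e]
    refine (norm_mul_le _ _).trans ?_
    refine (mul_le_mul (norm_mul_le _ _) (hT b) (norm_nonneg _) (by positivity)).trans ?_
    refine (mul_le_mul_of_nonneg_right
      (mul_le_mul (hT a) (hao i j) (norm_nonneg _) (by positivity)) (by positivity)).trans ?_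
    exact le_of_eq (by ring)
  set α := q ^ (a - i).natAbs * q ^ (j - b).natAbs with hα
  set β := q ^ (i - j).natAbs
  have hα0 : 0 < α := by positivity
  have hβ0 : 0 < β := by positivity
  rcases le_total α β with h | h
  · refine hx1.trans ?_
    gcongr
    nlinarith
  · refine hx2.trans ?_
    gcongr
    nlinarith

/-- the truncated operator -/
lemma aux_VRV (T : ℤ → H →L[ℂ] H) (q D M S : ℝ) (hq0 : 0 < q) (hD : 1 ≤ D)
    (hM0 : 0 ≤ M) (hT : ∀ j, ‖T j‖ ≤ D)
    (hao : ∀ j k : ℤ, ‖T j * T k‖ ≤ D * (q ^ (j - k).natAbs) ^ 2)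
    (hM : ∀ F : Finset ℤ, ‖∑ j ∈ F, T j‖ ≤ M)
    (hS : ∀ (F : Finset ℤ) (x : ℤ), ∑ i ∈ F, q ^ (i - x).natAbs ≤ S)
    (J F L : Finset ℤ) (l : ℤ) :
    ‖(∑ m ∈ L, ∑ c ∈ J, T c * T (c + m)) * (∑ i ∈ F, T i * T (i + l)) *
      (∑ m ∈ L, ∑ b ∈ J, T b * T (b + m))‖ ≤
      (L.card : ℝ) ^ 2 * (D ^ 3 * q ^ l.natAbs * S ^ 2 * (2 * M) ^ 2) := by
  have hS0 : 0 ≤ S := by simpa using hS ∅ 0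
  have key : ∀ m ∈ L, ∀ m' ∈ L, ‖(∑ c ∈ J, T c * T (c + m)) * (∑ i ∈ F, T i * T (i + l)) *
      (∑ b ∈ J, T b * T (b + m'))‖ ≤ D ^ 3 * q ^ l.natAbs * S ^ 2 * (2 * M) ^ 2 := by
    intro m _ m' _
    refine ContinuousLinearMap.opNorm_le_bound _ (by positivity) fun f => ?_
    set X := (∑ c ∈ J, T c * T (c + m)) * (∑ i ∈ F, T i * T (i + l)) *
      (∑ b ∈ J, T b * T (b + m')) with hX
    set K := D ^ 3 * q ^ l.natAbs * S ^ 2 * (2 * M) ^ 2 with hK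
    suffices h : ∀ g : H, ‖inner ℂ g (X f)‖ ≤ K * ‖f‖ * ‖g‖ by
      have h1 := h (X f)
      rw [inner_self_eq_norm_sq_to_K, norm_pow, RCLike.norm_ofReal, abs_norm, sq] at h1
      rcases (norm_nonneg (X f)).eq_or_lt with h0 | h0
      · rw [← h0]; positivity
      · exact le_of_mul_le_mul_right h1 h0
    intro g
    set u : ℤ → ℝ := fun c => ‖ContinuousLinearMap.adjoint (T c) g‖ with hu
    set v : ℤ → ℝ := fun b => ‖T (b + m') f‖ with hv
    have hXf : X f = ∑ i ∈ F, ∑ c ∈ J, ∑ b ∈ J,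
        T c ((T (c + m) * T i * (T (i + l) * T b)) (T (b + m') f)) := by
      have : X = ∑ i ∈ F, ∑ c ∈ J, ∑ b ∈ J,
        T c * ((T (c + m) * T i * (T (i + l) * T b)) * (T (b + m'))) := by
        rw [hX, Finset.mul_sum F, Finset.sum_mul F]
        refine Finset.sum_congr rfl fun i _ => ?_
        rw [Finset.sum_mul, Finset.sum_mul]
        refine Finset.sum_congr rfl fun c _ => ?_
        rw [Finset.mul_sum]
        refine Finset.sum_congr rfl fun b _ => ?_
        simp only [mul_assoc]
      rw [this]
      simp only [sum_apply, mul_apply_eq_comp]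
    have hbound : ‖inner ℂ g (X f)‖ ≤ ∑ i ∈ F, ∑ c ∈ J, ∑ b ∈ J,
        u c * (D ^ 3 * (q ^ (c + m - i).natAbs * q ^ (i + l - b).natAbs * q ^ l.natAbs) * v b) := by
      rw [hXf]
      simp only [inner_sum]
      refine norm_sum_le_of_le _ fun i _ => norm_sum_le_of_le _ fun c _ =>
        norm_sum_le_of_le _ fun b _ => ?_
      rw [← ContinuousLinearMap.adjoint_inner_left]
      refine (norm_inner_le_norm _ _).trans ?_
      refine mul_le_mul_of_nonneg_left ?_ (norm_nonneg _)
      refine ContinuousLinearMap.le_of_opNorm_le _ ?_ _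
      have := aux_four T q D hq0 hD hT hao (c + m) i (i + l) b
      rwa [show (i - (i + l)).natAbs = l.natAbs by omega] at this
    set P : ℤ → ℝ := fun i => ∑ c ∈ J, q ^ (c + m - i).natAbs * u c with hP
    set Q : ℤ → ℝ := fun i => ∑ b ∈ J, q ^ (i + l - b).natAbs * v b with hQ
    have hre : ∑ i ∈ F, ∑ c ∈ J, ∑ b ∈ J,
        u c * (D ^ 3 * (q ^ (c + m - i).natAbs * q ^ (i + l - b).natAbs * q ^ l.natAbs) * v b)
        = D ^ 3 * q ^ l.natAbs * ∑ i ∈ F, P i * Q i := by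
      rw [Finset.mul_sum]
      refine Finset.sum_congr rfl fun i _ => ?_
      rw [hP, hQ]
      simp only
      rw [Finset.sum_mul_sum, Finset.mul_sum]
      refine Finset.sum_congr rfl fun c _ => ?_
      rw [Finset.mul_sum]
      refine Finset.sum_congr rfl fun b _ => ?_
      ring
    have hPs : ∑ i ∈ F, P i ^ 2 ≤ S ^ 2 * (2 * M * ‖g‖) ^ 2 := by
      refine (aux_young (fun i c => q ^ (c + m - i).natAbs) (fun _ _ => by positivity) S F J
        (fun i => ?_) (fun c => ?_) u).trans ?_
      · convert hS J (i - m) using 4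
        omega
      · convert hS F (c + m) using 3
        omega
      · gcongr
        exact aux_sq_adj T M hM J g
    have hQs : ∑ i ∈ F, Q i ^ 2 ≤ S ^ 2 * (2 * M * ‖f‖) ^ 2 := by
      refine (aux_young (fun i c => q ^ (i + l - c).natAbs) (fun _ _ => by positivity) S F J
        (fun i => ?_) (fun c => ?_) v).trans ?_
      · convert hS J (i + l) using 3
        omega
      · convert hS F (c - l) using 4
        omega
      · gcongr
        have := aux_sq T M hM (J.map (addRightEmbedding m')) f
        rwa [Finset.sum_map] at this
    have hPQ : ∑ i ∈ F, P i * Q i ≤ S ^ 2 * (2 * M) ^ 2 * ‖f‖ * ‖g‖ := by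
      refine le_of_sq_le_sq ?_ (by positivity)
      refine (Finset.sum_mul_sq_le_sq_mul_sq F P Q).trans ?_
      refine (mul_le_mul hPs hQs (Finset.sum_nonneg fun _ _ => sq_nonneg _)
        (by positivity)).trans (le_of_eq (by ring))
    refine hbound.trans ?_
    rw [hre, hK]
    calc _ ≤ D ^ 3 * q ^ l.natAbs * (S ^ 2 * (2 * M) ^ 2 * ‖f‖ * ‖g‖) := by gcongr
      _ = _ := by ring
  calc _ = ‖∑ m ∈ L, ∑ m' ∈ L, (∑ c ∈ J, T c * T (c + m)) * (∑ i ∈ F, T i * T (i + l)) *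
      (∑ b ∈ J, T b * T (b + m'))‖ := by
        congr 1
        rw [Finset.sum_mul, Finset.sum_mul]
        simp_rw [Finset.mul_sum]
    _ ≤ ∑ m ∈ L, ∑ m' ∈ L, D ^ 3 * q ^ l.natAbs * S ^ 2 * (2 * M) ^ 2 := by
        refine norm_sum_le_of_le _ fun m hm => norm_sum_le_of_le _ fun m' hm' => key m hm m' hm'
    _ = _ := by simp; ring

lemma aux_inv (V R : H →L[ℂ] H) (h : ‖1 - V‖ ≤ 1 / 2) : ‖R‖ ≤ 4 * ‖V * R * V‖ := by
  have h1 : ‖R‖ ≤ 2 * ‖V * R‖ := by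
    have e : R = V * R + (1 - V) * R := by noncomm_ring
    have h2 : ‖R‖ ≤ ‖V * R‖ + ‖(1 - V) * R‖ := by
      conv_lhs => rw [e]
      exact norm_add_le _ _
    have h3 := norm_mul_le (1 - V) R
    nlinarith [norm_nonneg R]
  have h1' : ‖V * R‖ ≤ 2 * ‖V * R * V‖ := by
    have e : V * R = V * R * V + V * R * (1 - V) := by noncomm_ring
    have h2 : ‖V * R‖ ≤ ‖V * R * V‖ + ‖V * R * (1 - V)‖ := by
      conv_lhs => rw [e]
      exact norm_add_le _ _
    have h3 := norm_mul_le (V * R) (1 - V)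
    nlinarith [norm_nonneg (V * R)]
  linarith

lemma aux_finite (T : ℤ → H →L[ℂ] H) (q D M S : ℝ) (hq0 : 0 < q) (hD : 1 ≤ D)
    (hM0 : 0 ≤ M) (hT : ∀ j, ‖T j‖ ≤ D)
    (hao : ∀ j k : ℤ, ‖T j * T k‖ ≤ D * (q ^ (j - k).natAbs) ^ 2)
    (hM : ∀ F : Finset ℤ, ‖∑ j ∈ F, T j‖ ≤ M)
    (hS : ∀ (F : Finset ℤ) (x : ℤ), ∑ i ∈ F, q ^ (i - x).natAbs ≤ S)
    (n : ℕ) (hsupp : ∀ j, j ∉ Finset.Icc (-(n:ℤ)) n → T j = 0)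
    (hone : ∑ j ∈ Finset.Icc (-(n:ℤ)) n, T j = 1)
    (ρ : ℕ → ℝ) (hρ : ∀ N : ℕ, ρ N = (2 * N + 1) ^ 2 * (4 * (D ^ 3 * S ^ 2 * (2 * M) ^ 2)) * q ^ N)
    (N₀ : ℕ) (hN₀ : ∀ m, ∑ k ∈ Finset.Ico N₀ m, 2 * ρ k ≤ 1 / 2)
    (l : ℤ) (F : Finset ℤ) (hl : N₀ ≤ l.natAbs) :
    ‖∑ i ∈ F, T i * T (i + l)‖ ≤ ρ l.natAbs := by
  set J := Finset.Icc (-(n:ℤ)) n with hJ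
  set V : ℕ → H →L[ℂ] H := fun N => ∑ m ∈ Finset.Icc (-(N:ℤ)) N, ∑ c ∈ J, T c * T (c + m) with hV
  have hρ0 : ∀ k, 0 ≤ ρ k := fun k => by rw [hρ]; positivity
  have step : ∀ (l : ℤ) (F : Finset ℤ), ‖1 - V l.natAbs‖ ≤ 1 / 2 →
      ‖∑ i ∈ F, T i * T (i + l)‖ ≤ ρ l.natAbs := by
    intro l F h
    refine (aux_inv _ _ h).trans ?_
    have := aux_VRV T q D M S hq0 hD hM0 hT hao hM hS J F
      (Finset.Icc (-(l.natAbs:ℤ)) l.natAbs) l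
    have hc : ((Finset.Icc (-(l.natAbs:ℤ)) l.natAbs).card : ℝ) = 2 * l.natAbs + 1 := by
      rw [Int.card_Icc]
      have : ((l.natAbs:ℤ) + 1 - -(l.natAbs:ℤ)).toNat = 2 * l.natAbs + 1 := by omega
      rw [this]; push_cast; ring
    rw [hc] at this
    rw [hρ]
    calc _ ≤ 4 * _ := mul_le_mul_of_nonneg_left this (by norm_num)
      _ = _ := by ring
  have htop : ∀ N : ℕ, 2 * n ≤ N → V N = 1 := by
    intro N hN
    rw [hV]
    simp only
    rw [Finset.sum_comm]
    have : ∀ c ∈ J, ∑ m ∈ Finset.Icc (-(N:ℤ)) N, T c * T (c + m) = T c := by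
      intro c hc
      rw [hJ, Finset.mem_Icc] at hc
      rw [← Finset.mul_sum]
      have e : ∑ m ∈ Finset.Icc (-(N:ℤ)) N, T (c + m) = 1 := by
        rw [← hone]
        have := Finset.sum_map (Finset.Icc (-(N:ℤ)) N) (addLeftEmbedding c) T
        simp only [addLeftEmbedding_apply] at this
        rw [← this]
        symm
        refine Finset.sum_subset ?_ fun x _ hx => hsupp x hx
        intro x hx
        rw [hJ, Finset.mem_Icc] at hx
        rw [Finset.mem_map]
        refine ⟨x - c, ?_, by simp⟩
        rw [Finset.mem_Icc]
        omega
      rw [e, mul_one]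
    rw [Finset.sum_congr rfl this, hone]
  have half : ∀ N m, N₀ ≤ N → ∑ k ∈ Finset.Ico N m, 2 * ρ k ≤ 1 / 2 := by
    intro N m h
    refine le_trans ?_ (hN₀ m)
    refine Finset.sum_le_sum_of_subset_of_nonneg (Finset.Ico_subset_Ico_left h) ?_
    intro k _ _
    have := hρ0 k
    positivity
  have main : ∀ d N : ℕ, N₀ ≤ N → 2 * n ≤ N + d →
      ‖1 - V N‖ ≤ ∑ k ∈ Finset.Ico (N + 1) (2 * n + 1), 2 * ρ k := by
    intro d
    induction d with
    | zero =>
      intro N _ h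
      rw [htop N (by omega), sub_self, norm_zero]
      exact Finset.sum_nonneg fun k _ => mul_nonneg (by norm_num) (hρ0 k)
    | succ d ih =>
      intro N h0 h
      by_cases hc : 2 * n ≤ N + d
      · exact ih N h0 hc
      have h1 := ih (N + 1) (by omega) (by omega)
      have h2 := h1.trans (half (N + 1 + 1) _ (by omega))
      have ha := step ((N + 1 : ℕ) : ℤ) J h2
      have hb := step (-((N + 1 : ℕ) : ℤ)) J (by rwa [Int.natAbs_neg, Int.natAbs_natCast])
      rw [Int.natAbs_neg] at hb
      rw [Int.natAbs_natCast] at ha hb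
      rw [Finset.sum_eq_sum_Ico_succ_bot (by omega)]
      have e : V (N + 1) = V N + (∑ i ∈ J, T i * T (i + ((N + 1 : ℕ) : ℤ)))
          + ∑ i ∈ J, T i * T (i + -((N + 1 : ℕ) : ℤ)) := by
        have hI : Finset.Icc (-((N + 1 : ℕ) : ℤ)) ((N + 1 : ℕ) : ℤ) =
            insert (-((N + 1 : ℕ) : ℤ)) (insert ((N + 1 : ℕ) : ℤ) (Finset.Icc (-(N:ℤ)) N)) := by
          ext x
          simp only [Finset.mem_insert, Finset.mem_Icc]
          omega
        rw [hV]
        simp only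
        rw [hI, Finset.sum_insert, Finset.sum_insert]
        · abel
        · simp only [Finset.mem_Icc]; omega
        · simp only [Finset.mem_insert, Finset.mem_Icc]; omega
      have e2 : 1 - V N = (1 - V (N + 1)) + (∑ i ∈ J, T i * T (i + ((N + 1 : ℕ) : ℤ)))
          + ∑ i ∈ J, T i * T (i + -((N + 1 : ℕ) : ℤ)) := by
        rw [e]; abel
      rw [e2]
      refine (norm_add₃_le).trans ?_
      linarith
  exact step l F ((main (2 * n) l.natAbs hl (by omega)).trans (half _ _ (by omega)))

lemma aux_bdd (T : ℤ → H →L[ℂ] H) (hsum : ∀ f : H, HasSum (fun j : ℤ => T j f) f) :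
    ∃ M : ℝ, 0 ≤ M ∧ ∀ F : Finset ℤ, ‖∑ j ∈ F, T j‖ ≤ M := by
  classical
  obtain ⟨M, hM⟩ := banach_steinhaus (g := fun F : Finset ℤ => ∑ j ∈ F, T j) (by
    intro f
    obtain ⟨s, hs⟩ := summable_iff_vanishing_norm.1 (hsum f).summable 1 one_pos
    refine ⟨1 + ∑ j ∈ s, ‖T j f‖, fun F => ?_⟩
    rw [sum_apply, ← Finset.sum_inter_add_sum_sdiff F s, add_comm]
    refine (norm_add_le _ _).trans (add_le_add (hs _ Finset.sdiff_disjoint).le ?_)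
    refine (norm_sum_le _ _).trans ?_
    exact Finset.sum_le_sum_of_subset_of_nonneg Finset.inter_subset_right
      fun _ _ _ => norm_nonneg _)
  exact ⟨M, (norm_nonneg _).trans (hM ∅), hM⟩

lemma aux_U (T : ℤ → H →L[ℂ] H) (hsum : ∀ f : H, HasSum (fun j : ℤ => T j f) f)
    (M : ℝ) (hM : ∀ F : Finset ℤ, ‖∑ j ∈ F, T j‖ ≤ M) :
    ∃ U : Set ℤ → H →L[ℂ] H, (∀ A f, HasSum (A.indicator fun k => T k f) (U A f)) ∧
      ∀ A, ‖U A‖ ≤ M := by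
  classical
  have hM0 : 0 ≤ M := (norm_nonneg _).trans (hM ∅)
  have hs : ∀ (A : Set ℤ) (f : H), Summable (A.indicator fun k => T k f) :=
    fun A f => (hsum f).summable.indicator A
  have hb : ∀ (A : Set ℤ) (f : H), ‖∑' k, A.indicator (fun k => T k f) k‖ ≤ M * ‖f‖ := by
    intro A f
    refine le_of_tendsto (hs A f).hasSum.norm (Filter.Eventually.of_forall fun F => ?_)
    have : ∑ k ∈ F, A.indicator (fun k => T k f) k = (∑ k ∈ F with k ∈ A, T k) f := by
      rw [sum_apply, Finset.sum_filter]
      rfl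
    rw [this]
    exact ContinuousLinearMap.le_of_opNorm_le _ (hM _) f
  refine ⟨fun A => LinearMap.mkContinuous
    { toFun := fun f => ∑' k, A.indicator (fun k => T k f) k
      map_add' := fun f g => ?_
      map_smul' := fun c f => ?_ } M (hb A), fun A f => (hs A f).hasSum,
    fun A => LinearMap.mkContinuous_norm_le _ hM0 _⟩
  · rw [← (hs A f).tsum_add (hs A g)]
    congr 1
    ext k
    by_cases hk : k ∈ A <;> simp [hk]
  · rw [RingHom.id_apply, ← (hs A f).tsum_const_smul c]
    congr 1
    ext k
    by_cases hk : k ∈ A <;> simp [hk]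

lemma aux_UU (T : ℤ → H →L[ℂ] H) (A A' : Set ℤ) (U U' : H →L[ℂ] H)
    (hU : ∀ f, HasSum (A.indicator fun k => T k f) (U f))
    (hU' : ∀ f, HasSum (A'.indicator fun k => T k f) (U' f))
    (B : ℝ) (hB : ∀ F F' : Finset ℤ, (∀ k ∈ F, k ∈ A) → (∀ k ∈ F', k ∈ A') →
      ∑ k ∈ F, ∑ k' ∈ F', ‖T k * T k'‖ ≤ B) : ‖U * U'‖ ≤ B := by
  classical
  have hB0 : 0 ≤ B := by simpa using hB ∅ ∅ (by simp) (by simp)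
  refine ContinuousLinearMap.opNorm_le_bound _ hB0 fun f => ?_
  rw [mul_apply_eq_comp]
  refine le_of_tendsto (hU (U' f)).norm (Filter.Eventually.of_forall fun F => ?_)
  have e : ∀ (A : Set ℤ) (F : Finset ℤ) (f : H),
      ∑ k ∈ F, A.indicator (fun k => T k f) k = (∑ k ∈ F with k ∈ A, T k) f := by
    intro A F f
    rw [sum_apply, Finset.sum_filter]
    rfl
  rw [e]
  have ht := (((∑ k ∈ F with k ∈ A, T k).continuous.tendsto _).comp (hU' f)).norm
  refine le_of_tendsto ht (Filter.Eventually.of_forall fun F' => ?_)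
  simp only [Function.comp]
  rw [e, ← mul_apply_eq_comp]
  refine ContinuousLinearMap.le_of_opNorm_le _ ?_ f
  rw [Finset.sum_mul_sum]
  refine le_trans (norm_sum_le_of_le _ fun k _ => norm_sum_le _ _) ?_
  exact hB _ _ (fun k hk => (Finset.mem_filter.1 hk).2) (fun k hk => (Finset.mem_filter.1 hk).2)

lemma aux_main (T : ℤ → H →L[ℂ] H) (hsum : ∀ f : H, HasSum (fun j : ℤ => T j f) f)
    (q C D M S : ℝ) (hq0 : 0 < q) (hq1 : q ≤ 1) (hC : 0 ≤ C) (hM0 : 0 ≤ M)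
    (hD : D = 1 + M + M ^ 2 + C * S ^ 2)
    (hao : ∀ j k : ℤ, ‖T j * T k‖ ≤ C * (q ^ (j - k).natAbs) ^ 2)
    (hM : ∀ F : Finset ℤ, ‖∑ j ∈ F, T j‖ ≤ M)
    (hS : ∀ (F : Finset ℤ) (x : ℤ), ∑ i ∈ F, q ^ (i - x).natAbs ≤ S)
    (ρ : ℕ → ℝ) (hρ : ∀ N : ℕ, ρ N = (2 * N + 1) ^ 2 * (4 * (D ^ 3 * S ^ 2 * (2 * M) ^ 2)) * q ^ N)
    (N₀ : ℕ) (hN₀ : ∀ m, ∑ k ∈ Finset.Ico N₀ m, 2 * ρ k ≤ 1 / 2)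
    (l : ℤ) (F : Finset ℤ) (hl : N₀ ≤ l.natAbs) :
    ‖∑ i ∈ F, T i * T (i + l)‖ ≤ ρ l.natAbs := by
  classical
  have hS0 : 0 ≤ S := by simpa using hS ∅ 0
  have hCS : 0 ≤ C * S ^ 2 := by positivity
  obtain ⟨U, hU, hUM⟩ := aux_U T hsum M hM
  set n : ℕ := 1 + ∑ i ∈ F, (i.natAbs + (i + l).natAbs) with hn
  have hnF : ∀ i ∈ F, i.natAbs + (i + l).natAbs < n := by
    intro i hi
    have := Finset.single_le_sum (f := fun i : ℤ => i.natAbs + (i + l).natAbs)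
      (fun _ _ => Nat.zero_le _) hi
    omega
  have hn1 : 1 ≤ n := by omega
  clear_value n
  let cl : ℤ → ℤ := fun k => max (-(n:ℤ)) (min n k)
  have hcl : ∀ k, cl k = max (-(n:ℤ)) (min n k) := fun k => rfl
  let T' : ℤ → H →L[ℂ] H := fun j => U {k | cl k = j}
  have hU_ext : ∀ (A : Set ℤ) (X : H →L[ℂ] H),
      (∀ f, HasSum (A.indicator fun k => T k f) (X f)) → X = U A := by
    intro A X h
    ext f
    exact (h f).unique (hU A f)
  have hTT' : ∀ j : ℤ, j.natAbs < n → T' j = T j := by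
    intro j hj
    refine (hU_ext _ _ fun f => ?_).symm
    have e : {k | cl k = j} = {j} := by
      ext k
      simp only [Set.mem_ofPred_eq, Set.mem_singleton_iff, hcl]
      omega
    rw [e]
    have := hasSum_single (f := ({j} : Set ℤ).indicator fun k => T k f) j (fun k hk => by
      simp [hk])
    simpa using this
  have hsumT' : ∀ F : Finset ℤ, ∑ j ∈ F, T' j = U {k | cl k ∈ F} := by
    intro F
    refine hU_ext _ _ fun f => ?_
    have := hasSum_sum (s := F) (f := fun j => ({k | cl k = j} : Set ℤ).indicator fun k => T k f)
      (a := fun j => T' j f) (fun j _ => hU _ f)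
    rw [sum_apply]
    convert this using 1
    ext k
    simp only [Set.indicator, Set.mem_ofPred_eq]
    rw [Finset.sum_ite_eq]
  have hsuppT' : ∀ j, j ∉ Finset.Icc (-(n:ℤ)) n → T' j = 0 := by
    intro j hj
    refine (hU_ext _ _ fun f => ?_).symm
    have e : {k | cl k = j} = ∅ := by
      ext k
      simp only [Set.mem_ofPred_eq, Set.mem_empty_iff_false, hcl, iff_false]
      rw [Finset.mem_Icc] at hj
      omega
    rw [e]
    simp
  have honeT' : ∑ j ∈ Finset.Icc (-(n:ℤ)) n, T' j = 1 := by
    rw [hsumT']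
    refine (hU_ext _ _ fun f => ?_).symm
    have e : {k | cl k ∈ Finset.Icc (-(n:ℤ)) n} = Set.univ := by
      ext k
      simp only [Set.mem_ofPred_eq, Set.mem_univ, hcl, iff_true, Finset.mem_Icc]
      omega
    rw [e]
    simpa using hsum f
  have haoT' : ∀ j k : ℤ, ‖T' j * T' k‖ ≤ D * (q ^ (j - k).natAbs) ^ 2 := by
    intro j k
    by_cases hjk : j = k
    · subst hjk
      rw [sub_self, Int.natAbs_zero, pow_zero, one_pow, mul_one]
      refine (norm_mul_le _ _).trans ?_
      refine (mul_le_mul (hUM _) (hUM _) (norm_nonneg _) hM0).trans ?_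
      nlinarith
    · have : ‖T' j * T' k‖ ≤ C * S ^ 2 * (q ^ (j - k).natAbs) ^ 2 := by
        refine aux_UU T _ _ _ _ (hU {i | cl i = j}) (hU {i | cl i = k}) _ ?_
        intro F F' hF hF'
        have hb : ∀ a ∈ F, ∀ b ∈ F', ‖T a * T b‖ ≤
            C * (q ^ (j - k).natAbs) ^ 2 * (q ^ (a - j).natAbs * q ^ (b - k).natAbs) := by
          intro a ha b hb
          have h1 : cl a = j := hF a ha
          have h2 : cl b = k := hF' b hb
          rw [hcl] at h1 h2
          have h3 : (a - b).natAbs = (j - k).natAbs + ((a - j).natAbs + (b - k).natAbs) := by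
            omega
          refine (hao a b).trans ?_
          rw [h3, pow_add q, mul_pow, ← mul_assoc, pow_add q]
          have hx0 : 0 < q ^ (a - j).natAbs * q ^ (b - k).natAbs := by positivity
          have hx1 : q ^ (a - j).natAbs * q ^ (b - k).natAbs ≤ 1 :=
            mul_le_one₀ (pow_le_one₀ hq0.le hq1) (by positivity) (pow_le_one₀ hq0.le hq1)
          gcongr
          nlinarith
        calc _ ≤ ∑ a ∈ F, ∑ b ∈ F',
              C * (q ^ (j - k).natAbs) ^ 2 * (q ^ (a - j).natAbs * q ^ (b - k).natAbs) :=
              Finset.sum_le_sum fun a ha => Finset.sum_le_sum fun b hb' => hb a ha b hb'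
          _ = C * (q ^ (j - k).natAbs) ^ 2 *
              ((∑ a ∈ F, q ^ (a - j).natAbs) * ∑ b ∈ F', q ^ (b - k).natAbs) := by
              rw [Finset.sum_mul_sum, Finset.mul_sum]
              simp_rw [Finset.mul_sum]
          _ ≤ C * (q ^ (j - k).natAbs) ^ 2 * (S * S) := by
              gcongr
              · exact hS F j
              · exact hS F' k
          _ = _ := by ring
      refine this.trans ?_
      gcongr
      nlinarith
  have hfin := aux_finite T' q D M S hq0 (by nlinarith) hM0
    (fun j => (hUM _).trans (by nlinarith)) haoT' (fun F => by rw [hsumT']; exact hUM _) hS n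
    hsuppT' honeT' ρ hρ N₀ hN₀ l F hl
  have e : ∑ i ∈ F, T i * T (i + l) = ∑ i ∈ F, T' i * T' (i + l) := by
    refine Finset.sum_congr rfl fun i hi => ?_
    have := hnF i hi
    rw [hTT' i (by omega), hTT' (i + l) (by omega)]
  rw [e]
  exact hfin

lemma aux_lin (T : ℤ → H →L[ℂ] H) (M : ℝ) (hM0 : 0 ≤ M)
    (hM : ∀ F : Finset ℤ, ‖∑ j ∈ F, T j‖ ≤ M) (F : Finset ℤ) (x : ℤ → H) :
    ‖∑ i ∈ F, T i (x i)‖ ^ 2 ≤ (2 * M) ^ 2 * ∑ i ∈ F, ‖x i‖ ^ 2 := by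
  set y := ∑ i ∈ F, T i (x i) with hy
  set u : ℤ → ℝ := fun c => ‖ContinuousLinearMap.adjoint (T c) y‖ with hu
  have h1 : ‖y‖ ^ 2 ≤ ∑ i ∈ F, u i * ‖x i‖ := by
    have e : ‖y‖ ^ 2 = ‖inner ℂ y y‖ := by
      rw [inner_self_eq_norm_sq_to_K, norm_pow, RCLike.norm_ofReal, abs_norm]
    rw [e]
    conv_lhs => rw [hy]
    rw [← hy, inner_sum]
    refine norm_sum_le_of_le _ fun i _ => ?_
    rw [← ContinuousLinearMap.adjoint_inner_left]
    exact norm_inner_le_norm _ _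
  have h2 := Finset.sum_mul_sq_le_sq_mul_sq F u (fun i => ‖x i‖)
  have h3 := aux_sq_adj T M hM F y
  have h4 : 0 ≤ ∑ i ∈ F, ‖x i‖ ^ 2 := Finset.sum_nonneg fun _ _ => sq_nonneg _
  have h5 : (‖y‖ ^ 2) ^ 2 ≤ (2 * M * ‖y‖) ^ 2 * ∑ i ∈ F, ‖x i‖ ^ 2 := by
    calc (‖y‖ ^ 2) ^ 2 ≤ (∑ i ∈ F, u i * ‖x i‖) ^ 2 := by gcongr
      _ ≤ _ := h2
      _ ≤ _ := by gcongr
  rcases (norm_nonneg y).eq_or_lt with h0 | h0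
  · rw [← h0, zero_pow two_ne_zero]
    exact mul_nonneg (sq_nonneg _) h4
  · have h6 : 0 < ‖y‖ ^ 2 := by positivity
    refine le_of_mul_le_mul_right ?_ h6
    nlinarith

lemma aux_shift_sq (T : ℤ → H →L[ℂ] H) (M : ℝ)
    (hM : ∀ F : Finset ℤ, ‖∑ j ∈ F, T j‖ ≤ M) (F : Finset ℤ) (l : ℤ) (f : H) :
    ∑ i ∈ F, ‖T (i + l) f‖ ^ 2 ≤ (2 * M * ‖f‖) ^ 2 := by
  have := aux_sq T M hM (F.map (addRightEmbedding l)) f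
  rwa [Finset.sum_map] at this

lemma aux_row_bound (T : ℤ → H →L[ℂ] H) (M : ℝ) (hM0 : 0 ≤ M)
    (hM : ∀ F : Finset ℤ, ‖∑ j ∈ F, T j‖ ≤ M) (F : Finset ℤ) (l : ℤ) (f : H) :
    ‖∑ i ∈ F, T i (T (i + l) f)‖ ≤ (2 * M) ^ 2 * ‖f‖ := by
  refine le_of_sq_le_sq ?_ (by positivity)
  refine (aux_lin T M hM0 hM F _).trans ?_
  calc _ ≤ (2 * M) ^ 2 * (2 * M * ‖f‖) ^ 2 := by
        gcongr
        exact aux_shift_sq T M hM F l f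
    _ = _ := by ring

lemma aux_row_summable (T : ℤ → H →L[ℂ] H) (M : ℝ) (hM0 : 0 ≤ M)
    (hM : ∀ F : Finset ℤ, ‖∑ j ∈ F, T j‖ ≤ M) (l : ℤ) (f : H) :
    Summable fun i => T i (T (i + l) f) := by
  have hs : Summable fun i => ‖T (i + l) f‖ ^ 2 :=
    summable_of_sum_le (fun _ => sq_nonneg _) fun F => aux_shift_sq T M hM F l f
  rw [summable_iff_vanishing_norm]
  intro ε hε
  obtain ⟨s, hs⟩ := summable_iff_vanishing_norm.1 hs (ε ^ 2 / ((2 * M) ^ 2 + 1)) (by positivity)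
  refine ⟨s, fun t ht => ?_⟩
  have h1 := hs t ht
  rw [Real.norm_eq_abs] at h1
  have h2 := (le_abs_self _).trans_lt h1
  have h3 := aux_lin T M hM0 hM t (fun i => T (i + l) f)
  refine lt_of_pow_lt_pow_left₀ 2 hε.le (h3.trans_lt ?_)
  rw [lt_div_iff₀ (by positivity)] at h2
  have h4 : 0 ≤ ∑ i ∈ t, ‖T (i + l) f‖ ^ 2 := Finset.sum_nonneg fun _ _ => sq_nonneg _
  rcases h4.eq_or_lt with h5 | h5
  · rw [← h5, mul_zero]
    exact pow_pos hε 2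
  · nlinarith

lemma aux_fiber (x : ℤ × ℤ → H) (c : ℤ → ℝ)
    (hx : ∀ (l : ℤ) (F : Finset ℤ), ‖∑ j ∈ F, x (j, l)‖ ≤ c l) (t : Finset (ℤ × ℤ)) :
    ‖∑ p ∈ t, x p‖ ≤ ∑ l ∈ t.image Prod.snd, c l := by
  classical
  rw [← Finset.sum_fiberwise_of_maps_to (g := Prod.snd) (t := t.image Prod.snd)
    (fun p hp => Finset.mem_image_of_mem _ hp)]
  refine norm_sum_le_of_le _ fun l _ => ?_
  have e : ∑ p ∈ t with p.2 = l, x p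
      = ∑ j ∈ (t.filter fun p => p.2 = l).image Prod.fst, x (j, l) := by
    rw [Finset.sum_image]
    · refine Finset.sum_congr rfl fun p hp => ?_
      rw [← (Finset.mem_filter.1 hp).2]
    · intro p hp p' hp' h
      have h1 := (Finset.mem_filter.1 hp).2
      have h2 := (Finset.mem_filter.1 hp').2
      exact Prod.ext h (h1.trans h2.symm)
  rw [e]
  exact hx _ _

lemma aux_prod_summable (x : ℤ × ℤ → H) (c : ℤ → ℝ) (hc : Summable c)
    (hx : ∀ (l : ℤ) (F : Finset ℤ), ‖∑ j ∈ F, x (j, l)‖ ≤ c l)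
    (hs : ∀ l, Summable fun j => x (j, l)) : Summable x := by
  classical
  rw [summable_iff_vanishing_norm]
  intro ε hε
  obtain ⟨L, hL⟩ := summable_iff_vanishing_norm.1 hc (ε / 2) (by positivity)
  have hη : 0 < ε / (2 * (L.card + 1)) := by positivity
  choose s hs' using fun l => summable_iff_vanishing_norm.1 (hs l) _ hη
  refine ⟨L.biUnion fun l => (s l).image fun j => (j, l), fun t ht => ?_⟩
  rw [← Finset.sum_filter_add_sum_filter_not t (fun p => p.2 ∈ L)]
  have h1 : ‖∑ p ∈ t with ¬ p.2 ∈ L, x p‖ < ε / 2 := by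
    refine (aux_fiber x c hx _).trans_lt ((le_abs_self _).trans_lt ?_)
    rw [← Real.norm_eq_abs]
    refine hL _ ?_
    rw [Finset.disjoint_left]
    intro l hl
    obtain ⟨p, hp, rfl⟩ := Finset.mem_image.1 hl
    exact (Finset.mem_filter.1 hp).2
  have h2 : ‖∑ p ∈ t with p.2 ∈ L, x p‖ ≤ ∑ l ∈ L, ε / (2 * (L.card + 1)) := by
    rw [← Finset.sum_fiberwise_of_maps_to (g := Prod.snd) (t := L)
      (fun p hp => (Finset.mem_filter.1 hp).2)]
    refine norm_sum_le_of_le _ fun l hl => ?_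
    have e : ∑ p ∈ t.filter (fun p => p.2 ∈ L) with p.2 = l, x p
        = ∑ j ∈ ((t.filter (fun p => p.2 ∈ L)).filter fun p => p.2 = l).image Prod.fst,
          x (j, l) := by
      rw [Finset.sum_image]
      · refine Finset.sum_congr rfl fun p hp => ?_
        rw [← (Finset.mem_filter.1 hp).2]
      · intro p hp p' hp' h
        have h1 := (Finset.mem_filter.1 hp).2
        have h2 := (Finset.mem_filter.1 hp').2
        exact Prod.ext h (h1.trans h2.symm)
    rw [e]
    refine (hs' l _ ?_).le
    rw [Finset.disjoint_left]
    intro j hj hjs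
    obtain ⟨p, hp, rfl⟩ := Finset.mem_image.1 hj
    have hp1 := Finset.mem_filter.1 hp
    have hp2 := (Finset.mem_filter.1 hp1.1).1
    refine Finset.disjoint_left.1 ht hp2 ?_
    rw [Finset.mem_biUnion]
    refine ⟨l, hl, Finset.mem_image.2 ⟨p.1, hjs, ?_⟩⟩
    rw [← hp1.2]
  have h3 : ∑ l ∈ L, ε / (2 * ((L.card : ℝ) + 1)) ≤ ε / 2 := by
    rw [Finset.sum_const, nsmul_eq_mul]
    rw [mul_div_assoc', div_le_div_iff₀ (by positivity) (by positivity)]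
    nlinarith
  refine (norm_add_le _ _).trans_lt ?_
  linarith

lemma aux_prod_bound (x : ℤ × ℤ → H) (c : ℤ → ℝ) (hc : Summable c)
    (hx : ∀ (l : ℤ) (F : Finset ℤ), ‖∑ j ∈ F, x (j, l)‖ ≤ c l)
    (hs : Summable x) : ‖∑' p, x p‖ ≤ ∑' l, c l := by
  refine le_of_tendsto hs.hasSum.norm (Filter.Eventually.of_forall fun t => ?_)
  refine (aux_fiber x c hx t).trans ?_
  exact hc.sum_le_tsum _ fun l _ => (norm_nonneg _).trans (hx l ∅)

/-- The rows are summably small in operator norm. -/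
lemma aux_coeff (T : ℤ → H →L[ℂ] H) (Cc ε' : ℝ) (hC : 0 < Cc) (hε' : 0 < ε')
    (hao : ∀ j j' : ℤ, ‖(T j).comp (T j')‖ ≤ Cc * (2:ℝ) ^ (-((|j - j'| : ℤ) : ℝ) * ε'))
    (hsum : ∀ f : H, HasSum (fun j : ℤ => T j f) f)
    (M : ℝ) (hM0 : 0 ≤ M) (hM : ∀ F : Finset ℤ, ‖∑ j ∈ F, T j‖ ≤ M) :
    ∃ c : ℤ → ℝ, Summable c ∧ ∀ (f : H) (l : ℤ) (F : Finset ℤ),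
      ‖∑ j ∈ F, T j (T (j + l) f)‖ ≤ c l * ‖f‖ := by
  classical
  set q : ℝ := (2:ℝ) ^ (-ε' / 2) with hq
  have hq0 : 0 < q := by positivity
  have hq1 : q < 1 := Real.rpow_lt_one_of_one_lt_of_neg (by norm_num) (by linarith)
  have hao' : ∀ j k : ℤ, ‖T j * T k‖ ≤ Cc * (q ^ (j - k).natAbs) ^ 2 := by
    intro j k
    refine (hao j k).trans (le_of_eq ?_)
    rw [← pow_mul, hq, ← Real.rpow_natCast, ← Real.rpow_mul (by norm_num)]
    congr 2
    push_cast [Nat.cast_natAbs]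
    ring
  have hg : Summable fun n : ℕ => q ^ n := summable_geometric_of_lt_one hq0.le hq1
  have hqs : Summable fun i : ℤ => q ^ i.natAbs := by
    refine Summable.of_nat_of_neg ?_ ?_
    · simpa using hg
    · simpa using hg
  set S := ∑' i : ℤ, q ^ i.natAbs with hSdef
  have hS : ∀ (F : Finset ℤ) (x : ℤ), ∑ i ∈ F, q ^ (i - x).natAbs ≤ S := by
    intro F x
    have := Finset.sum_map F (addRightEmbedding (-x)) (fun i : ℤ => q ^ i.natAbs)
    simp only [addRightEmbedding_apply, ← sub_eq_add_neg] at this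
    rw [← this]
    exact hqs.sum_le_tsum _ fun _ _ => by positivity
  set D := 1 + M + M ^ 2 + Cc * S ^ 2 with hD
  have hD0 : 0 ≤ D := by positivity
  set K := 4 * (D ^ 3 * S ^ 2 * (2 * M) ^ 2) with hK
  have hK0 : 0 ≤ K := by positivity
  set ρ : ℕ → ℝ := fun N => (2 * N + 1) ^ 2 * K * q ^ N with hρ
  have hρ0 : ∀ N, 0 ≤ ρ N := fun N => by simp only [hρ]; positivity
  have hρs : Summable ρ := by
    have hqn : ‖q‖ < 1 := by rw [Real.norm_eq_abs, abs_of_pos hq0]; exact hq1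
    have h2 := summable_pow_mul_geometric_of_norm_lt_one 2 hqn
    have h1 := summable_pow_mul_geometric_of_norm_lt_one 1 hqn
    have := ((h2.mul_left (4 * K)).add (h1.mul_left (4 * K))).add (hg.mul_left K)
    refine this.congr fun N => ?_
    simp only [hρ]
    ring
  obtain ⟨s, hs⟩ := summable_iff_vanishing_norm.1 hρs (1 / 4) (by norm_num)
  set N₀ := s.sup id + 1 with hN
  have hN₀ : ∀ m, ∑ k ∈ Finset.Ico N₀ m, 2 * ρ k ≤ 1 / 2 := by
    intro m
    have := hs (Finset.Ico N₀ m) (by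
      rw [Finset.disjoint_left]
      intro k hk hks
      have h1 : k ≤ s.sup id := Finset.le_sup (f := id) hks
      rw [Finset.mem_Ico] at hk
      omega)
    rw [Real.norm_eq_abs] at this
    have h2 := (le_abs_self _).trans_lt this
    rw [← Finset.mul_sum]
    linarith
  have hmain := aux_main T hsum q Cc D M S hq0 hq1.le hC.le hM0 hD hao' hM hS ρ (fun _ => rfl)
    N₀ hN₀
  refine ⟨fun l => ρ l.natAbs + if l ∈ Finset.Icc (-(N₀:ℤ)) N₀ then (2 * M) ^ 2 else 0, ?_, ?_⟩
  · refine Summable.add ?_ ?_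
    · refine Summable.of_nat_of_neg ?_ ?_
      · simpa using hρs
      · simpa using hρs
    · refine summable_of_ne_finset_zero (s := Finset.Icc (-(N₀:ℤ)) N₀) fun l hl => ?_
      rw [if_neg hl]
  · intro f l F
    by_cases hl : l ∈ Finset.Icc (-(N₀:ℤ)) N₀
    · simp only [if_pos hl]
      refine (aux_row_bound T M hM0 hM F l f).trans ?_
      have := hρ0 l.natAbs
      gcongr
      linarith
    · simp only [if_neg hl, add_zero]
      rw [Finset.mem_Icc] at hl
      have := ContinuousLinearMap.le_of_opNorm_le _ (hmain l F (by omega)) f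
      simpa only [sum_apply, mul_apply_eq_comp] using this

end aux

/-- Abstract form of (1.2) and [DJS, Lemma 2.2]: if `T_j` (playing the role of
`D_j M_{b₁}`) satisfy the almost-orthogonality estimate
`‖T_j T_{j'}‖ ≤ C 2^{-|j-j'|ε'}` and `Σ_j T_j = I` strongly, then with
`𝒱_N = Σ_j T_j (Σ_{|ℓ|≤N} T_{j+ℓ})` and `ℛ_N = Σ_{|ℓ|>N} Σ_j T_j T_{j+ℓ}` one has
`𝒱_N + ℛ_N = I`, `‖ℛ_N‖ → 0`, and `𝒱_N` is invertible with uniformly bounded inverse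
for `N` large. -/
theorem tb_product_VN_RN_decomposition
    (H : Type*) [NormedAddCommGroup H] [InnerProductSpace ℂ H] [CompleteSpace H]
    (T : ℤ → H →L[ℂ] H) (Cc ε' : ℝ) (hC : 0 < Cc) (hε' : 0 < ε')
    (hao : ∀ j j' : ℤ, ‖(T j).comp (T j')‖ ≤ Cc * (2:ℝ) ^ (-((|j - j'| : ℤ) : ℝ) * ε'))
    (hsum : ∀ f : H, HasSum (fun j : ℤ => T j f) f) :
    (∀ (N : ℕ) (f : H),
      (∑' j : ℤ, T j (∑ l ∈ Finset.Icc (-(N:ℤ)) (N:ℤ), T (j + l) f)) +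
        (∑' p : ℤ × ℤ, if (N:ℤ) < |p.2| then T p.1 (T (p.1 + p.2) f) else 0) = f) ∧
    (∀ δ : ℝ, 0 < δ → ∃ N₀ : ℕ, ∀ N : ℕ, N₀ ≤ N → ∀ f : H,
      ‖∑' p : ℤ × ℤ, if (N:ℤ) < |p.2| then T p.1 (T (p.1 + p.2) f) else 0‖ ≤ δ * ‖f‖) ∧
    (∃ (N₀ : ℕ) (Kc : ℝ), 0 < Kc ∧ ∀ N : ℕ, N₀ ≤ N → ∃ W : H →L[ℂ] H, ‖W‖ ≤ Kc ∧
      (∀ f : H, W (∑' j : ℤ, T j (∑ l ∈ Finset.Icc (-(N:ℤ)) (N:ℤ), T (j + l) f)) = f) ∧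
      (∀ f : H,
        (∑' j : ℤ, T j (∑ l ∈ Finset.Icc (-(N:ℤ)) (N:ℤ), T (j + l) (W f))) = f)) := by
  classical
  obtain ⟨M, hM0, hM⟩ := aux_bdd T hsum
  obtain ⟨c, hc, hcb⟩ := aux_coeff T Cc ε' hC hε' hao hsum M hM0 hM
  have hrow := aux_row_summable T M hM0 hM
  set x : H → ℤ × ℤ → H := fun f p => T p.1 (T (p.1 + p.2) f) with hx
  have hxs : ∀ f, Summable (x f) := fun f =>
    aux_prod_summable (x f) (fun l => c l * ‖f‖) (hc.mul_right _) (hcb f) (fun l => hrow l f)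
  set R : ℕ → H → H := fun N f =>
    ∑' p : ℤ × ℤ, if (N:ℤ) < |p.2| then T p.1 (T (p.1 + p.2) f) else 0 with hR
  set V : ℕ → H → H := fun N f =>
    ∑' j : ℤ, T j (∑ l ∈ Finset.Icc (-(N:ℤ)) (N:ℤ), T (j + l) f) with hV
  have hRs : ∀ (N : ℕ) f, Summable fun p : ℤ × ℤ =>
      if (N:ℤ) < |p.2| then T p.1 (T (p.1 + p.2) f) else 0 := fun N f =>
    ((hxs f).indicator {p : ℤ × ℤ | (N:ℤ) < |p.2|}).congr fun p => by
      by_cases hp : (N:ℤ) < |p.2| <;> simp [hp, hx]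
  have hVs : ∀ (N : ℕ) f, Summable fun p : ℤ × ℤ =>
      if ¬ (N:ℤ) < |p.2| then T p.1 (T (p.1 + p.2) f) else 0 := fun N f =>
    ((hxs f).indicator {p : ℤ × ℤ | ¬ (N:ℤ) < |p.2|}).congr fun p => by
      by_cases hp : (N:ℤ) < |p.2|
      · rw [Set.indicator_of_notMem (by simpa using hp), if_neg (not_not.2 hp)]
      · rw [Set.indicator_of_mem (by simpa using hp), if_pos hp]
  have htot : ∀ f, ∑' p, x f p = f := by
    intro f
    rw [(hxs f).tsum_prod]
    have : ∀ j : ℤ, ∑' l : ℤ, x f (j, l) = T j f := by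
      intro j
      have h1 : HasSum (fun l : ℤ => T (j + l) f) f := (Equiv.addLeft j).hasSum_iff.2 (hsum f)
      exact ((T j).hasSum h1).tsum_eq
    simp_rw [this]
    exact (hsum f).tsum_eq
  have hVeq : ∀ (N : ℕ) f, V N f = ∑' p : ℤ × ℤ,
      if ¬ (N:ℤ) < |p.2| then T p.1 (T (p.1 + p.2) f) else 0 := by
    intro N f
    rw [(hVs N f).tsum_prod]
    refine tsum_congr fun j => ?_
    rw [tsum_eq_sum (s := Finset.Icc (-(N:ℤ)) (N:ℤ)), map_sum]
    · refine Finset.sum_congr rfl fun l hl => ?_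
      rw [Finset.mem_Icc, ← abs_le] at hl
      rw [if_pos (not_lt.2 hl)]
    · intro l hl
      rw [Finset.mem_Icc, ← abs_le] at hl
      rw [if_neg (not_not.2 (not_le.1 hl))]
  have h1 : ∀ (N : ℕ) (f : H), V N f + R N f = f := by
    intro N f
    rw [hVeq, hR]
    simp only
    rw [← (hVs N f).tsum_add (hRs N f)]
    conv_rhs => rw [← htot f]
    refine tsum_congr fun p => ?_
    by_cases hp : (N:ℤ) < |p.2| <;> simp [hp, hx]
  have h2 : ∀ δ : ℝ, 0 < δ → ∃ N₀ : ℕ, ∀ N : ℕ, N₀ ≤ N → ∀ f : H, ‖R N f‖ ≤ δ * ‖f‖ := by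
    intro δ hδ
    obtain ⟨s, hs⟩ := summable_iff_vanishing_norm.1 hc δ hδ
    refine ⟨s.sup Int.natAbs, fun N hN f => ?_⟩
    have hcs : Summable fun l : ℤ => (if (N:ℤ) < |l| then c l else 0) :=
      (hc.indicator {l : ℤ | (N:ℤ) < |l|}).congr fun l => by
        by_cases hl : (N:ℤ) < |l| <;> simp [hl]
    have hb := aux_prod_bound _ (fun l : ℤ => (if (N:ℤ) < |l| then c l else 0) * ‖f‖)
      (hcs.mul_right _) (fun l F => by
        by_cases hl : (N:ℤ) < |l|
        · simpa only [if_pos hl] using hcb f l F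
        · simp [if_neg hl]) (hRs N f)
    refine hb.trans ?_
    rw [tsum_mul_right]
    gcongr
    refine le_of_tendsto hcs.hasSum (Filter.Eventually.of_forall fun F => ?_)
    rw [← Finset.sum_filter]
    refine (le_abs_self _).trans ?_
    rw [← Real.norm_eq_abs]
    refine (hs _ ?_).le
    rw [Finset.disjoint_left]
    intro l hl hls
    have h3 : l.natAbs ≤ s.sup Int.natAbs := Finset.le_sup hls
    have h4 := (Finset.mem_filter.1 hl).2
    rw [Int.abs_eq_natAbs] at h4
    omega
  refine ⟨h1, h2, ?_⟩
  obtain ⟨N₀, hN₀⟩ := h2 (1 / 2) (by norm_num)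
  refine ⟨N₀, 2, by norm_num, fun N hN => ?_⟩
  have hRb := hN₀ N hN
  let Rl : H →ₗ[ℂ] H :=
    { toFun := R N
      map_add' := fun f g => by
        simp only [hR]
        rw [← (hRs N f).tsum_add (hRs N g)]
        refine tsum_congr fun p => ?_
        by_cases hp : (N:ℤ) < |p.2| <;> simp [hp]
      map_smul' := fun a f => by
        simp only [hR]
        rw [RingHom.id_apply, ← (hRs N f).tsum_const_smul a]
        refine tsum_congr fun p => ?_
        by_cases hp : (N:ℤ) < |p.2| <;> simp [hp] }
  let Rc : H →L[ℂ] H := Rl.mkContinuous (1 / 2) hRb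
  have hRc : ‖Rc‖ < 1 := (LinearMap.mkContinuous_norm_le _ (by norm_num) _).trans_lt (by norm_num)
  have hVR : ∀ f, V N f = (1 - Rc) f := fun f => by
    have : V N f = f - R N f := eq_sub_of_add_eq (h1 N f)
    rw [this]
    rfl
  let u := Units.oneSub Rc hRc
  have hu : (u : H →L[ℂ] H) = 1 - Rc := rfl
  refine ⟨(u⁻¹ : (H →L[ℂ] H)ˣ), ?_, fun f => ?_, fun f => ?_⟩
  · refine ContinuousLinearMap.opNorm_le_bound _ (by norm_num) fun f => ?_
    set g := ((u⁻¹ : (H →L[ℂ] H)ˣ) : H →L[ℂ] H) f with hg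
    have e : f = g - R N g := by
      have h3 : ((u : H →L[ℂ] H) * ((u⁻¹ : (H →L[ℂ] H)ˣ) : H →L[ℂ] H)) f = f := by
        rw [Units.mul_inv]; rfl
      rw [mul_apply_eq_comp, hu] at h3
      rw [← h3]
      rfl
    have h4 := hRb g
    have h5 : ‖g‖ ≤ ‖f‖ + ‖R N g‖ := by
      have : g = f + R N g := by
        conv_rhs => rw [e]
        abel
      calc ‖g‖ = ‖f + R N g‖ := by rw [← this]
        _ ≤ _ := norm_add_le _ _
    linarith
  · change ((u⁻¹ : (H →L[ℂ] H)ˣ) : H →L[ℂ] H) (V N f) = f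
    rw [hVR, ← hu, ← mul_apply_eq_comp, Units.inv_mul]
    rfl
  · change V N (((u⁻¹ : (H →L[ℂ] H)ˣ) : H →L[ℂ] H) f) = f
    rw [hVR, ← hu, ← mul_apply_eq_comp, Units.mul_inv]
    rfl
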